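/- arXiv:0902.4424 — 5 statements merged into one kernel-verified Lean document; each statement's English description precedes it below -/
import Mathlib

section
/- Let K be a real n×p matrix, y ∈ ℝⁿ, and λ > 0. The zero vector is a minimizer of the functional F_λ(x) = ‖Kx − y‖² + 2λ‖x‖₁ over ℝᵖ if and only if λ ≥ λ_max := max_i |(Kᵀy)_i| (i.e., λ ≥ ‖Kᵀy‖_∞). -/
open Finset

/-!
Expanding the square, `0` minimizes `‖K x - y‖² + 2 P x` iff `2 ⟪K x, y⟫ ≤ ‖K x‖² + 2 P x` for all
`x`. If `P` is positively homogeneous, replacing `x` by `t • x` and letting `t → 0⁺` removes the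
quadratic term, which leaves `⟪K x, y⟫ ≤ P x`. For `P = λ ‖·‖₁` this says that the linear form
`x ↦ ⟪K x, y⟫` has dual norm at most `λ`, and the dual of the `ℓ¹` norm is the `ℓ^∞` norm.
-/

open scoped RealInnerProductSpace Matrix

theorem nonneg_of_forall_pos_quadratic_nonneg {a b : ℝ}
    (h : ∀ t : ℝ, 0 < t → 0 ≤ a * t ^ 2 + b * t) : 0 ≤ b := by
  have slope_nonneg : ∀ t : ℝ, 0 < t → 0 ≤ a * t + b := fun t ht =>
    nonneg_of_mul_nonneg_left ((h t ht).trans_eq (by ring)) ht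
  have slope_tendsto : Filter.Tendsto (fun t : ℝ => a * t + b) (nhdsWithin 0 (Set.Ioi 0))
      (nhds b) := by
    have hcont : Continuous fun t : ℝ => a * t + b := by fun_prop
    simpa using (hcont.tendsto 0).mono_left nhdsWithin_le_nhds
  exact ge_of_tendsto slope_tendsto (eventually_nhdsWithin_of_forall slope_nonneg)

section InnerProductSpace

variable {E : Type*} [SeminormedAddCommGroup E] [InnerProductSpace ℝ E]

theorem norm_sq_le_norm_sub_sq_add_iff (u y : E) (c : ℝ) :
    ‖y‖ ^ 2 ≤ ‖u - y‖ ^ 2 + 2 * c ↔ 0 ≤ ‖u‖ ^ 2 + 2 * (c - ⟪u, y⟫) := by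
  rw [norm_sub_sq_real]
  constructor <;> intro h <;> linarith

theorem forall_norm_sq_le_norm_sub_sq_add_iff_forall_inner_le {V : Type*} [AddCommGroup V]
    [Module ℝ V] (K : V →ₗ[ℝ] E) (y : E) {P : V → ℝ}
    (hP : ∀ t : ℝ, 0 < t → ∀ x, P (t • x) = t * P x) :
    (∀ x, ‖y‖ ^ 2 ≤ ‖K x - y‖ ^ 2 + 2 * P x) ↔ ∀ x, ⟪K x, y⟫ ≤ P x := by
  simp only [norm_sq_le_norm_sub_sq_add_iff]
  constructor
  · intro h x
    have hquad : ∀ t : ℝ, 0 < t → 0 ≤ ‖K x‖ ^ 2 * t ^ 2 + 2 * (P x - ⟪K x, y⟫) * t := by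
      intro t ht
      have hx := h (t • x)
      rw [hP t ht, map_smul, norm_smul, mul_pow, Real.norm_eq_abs, sq_abs,
        real_inner_smul_left] at hx
      linarith
    linarith [nonneg_of_forall_pos_quadratic_nonneg hquad]
  · intro h x
    have hgap : 0 ≤ P x - ⟪K x, y⟫ := sub_nonneg.2 (h x)
    positivity

end InnerProductSpace

section Lasso

variable {ι : Type*} [Fintype ι]

theorem forall_apply_le_mul_sum_abs_iff [DecidableEq ι] (f : (ι → ℝ) →ₗ[ℝ] ℝ) (c : ℝ) :
    (∀ x, f x ≤ c * ∑ i, |x i|) ↔ ∀ i, |f (Pi.single i 1)| ≤ c := by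
  constructor
  · intro h i
    have hsum : ∑ k, |(Pi.single i 1 : ι → ℝ) k| = 1 := by
      simp [Pi.single_apply, apply_ite]
    have hpos := h (Pi.single i 1)
    have hneg := h (-Pi.single i 1)
    simp only [Pi.neg_apply, abs_neg, map_neg, hsum, mul_one] at hpos hneg
    exact abs_le'.2 ⟨hpos, hneg⟩
  · intro h x
    calc f x = ∑ i, x i * f (Pi.single i 1) := by
          conv_lhs => rw [pi_eq_sum_univ' x]
          simp
      _ ≤ ∑ i, c * |x i| := by
          refine sum_le_sum fun i _ => ?_
          calc x i * f (Pi.single i 1) ≤ |f (Pi.single i 1)| * |x i| := by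
                rw [mul_comm, ← abs_mul]
                exact le_abs_self _
            _ ≤ c * |x i| := mul_le_mul_of_nonneg_right (h i) (abs_nonneg _)
      _ = c * ∑ i, |x i| := (mul_sum ..).symm

variable {E : Type*} [SeminormedAddCommGroup E] [InnerProductSpace ℝ E]

/-- The lasso functional `F_λ(x) = ‖K x - y‖² + 2 λ ‖x‖₁` with data `y` in a real inner product
space. The `ℓ¹` norm is written as a sum because the norm of `ι → ℝ` is the sup norm. -/
def lassoFunctional (K : (ι → ℝ) →ₗ[ℝ] E) (y : E) (lam : ℝ) (x : ι → ℝ) : ℝ :=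
  ‖K x - y‖ ^ 2 + 2 * lam * ∑ i, |x i|

theorem lassoFunctional_zero (K : (ι → ℝ) →ₗ[ℝ] E) (y : E) (lam : ℝ) :
    lassoFunctional K y lam 0 = ‖y‖ ^ 2 := by
  simp [lassoFunctional]

theorem lassoFunctional_zero_le_iff_forall_inner_le (K : (ι → ℝ) →ₗ[ℝ] E) (y : E) (lam : ℝ) :
    (∀ x, lassoFunctional K y lam 0 ≤ lassoFunctional K y lam x) ↔
      ∀ x, ⟪K x, y⟫ ≤ lam * ∑ i, |x i| := by
  have hhom : ∀ t : ℝ, 0 < t → ∀ x : ι → ℝ,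
      lam * ∑ i, |(t • x) i| = t * (lam * ∑ i, |x i|) := by
    intro t ht x
    simp only [Pi.smul_apply, smul_eq_mul, abs_mul, abs_of_pos ht, ← mul_sum]
    ring
  rw [lassoFunctional_zero]
  simpa only [lassoFunctional, mul_assoc] using
    forall_norm_sq_le_norm_sub_sq_add_iff_forall_inner_le K y
      (P := fun x => lam * ∑ i, |x i|) hhom

theorem zero_is_lasso_minimizer_iff_general [DecidableEq ι] (K : (ι → ℝ) →ₗ[ℝ] E) (y : E)
    {lam : ℝ} (hlam : 0 ≤ lam) :
    (∀ x, lassoFunctional K y lam 0 ≤ lassoFunctional K y lam x) ↔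
      ⨆ i, |⟪K (Pi.single i 1), y⟫| ≤ lam := by
  have hdual : (∀ x, ⟪K x, y⟫ ≤ lam * ∑ i, |x i|) ↔ ∀ i, |⟪K (Pi.single i 1), y⟫| ≤ lam := by
    simpa [real_inner_comm] using forall_apply_le_mul_sum_abs_iff (innerₗ E y ∘ₗ K) lam
  rw [lassoFunctional_zero_le_iff_forall_inner_le, hdual]
  exact ⟨fun h => Real.iSup_le h hlam,
    fun h i => (le_ciSup (Set.finite_range _).bddAbove i).trans h⟩

end Lasso

section Matrix

variable {m ι : Type*} [Fintype m] [Fintype ι]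

/-- The map `x ↦ K x` of a real matrix `K`, with values in Euclidean space, so that the residual
`K x - y` is measured in the `ℓ²` norm; the source stays the plain function space `ι → ℝ`. -/
def euclideanMulVec (K : Matrix m ι ℝ) : (ι → ℝ) →ₗ[ℝ] EuclideanSpace ℝ m :=
  (WithLp.linearEquiv 2 ℝ (m → ℝ)).symm.toLinearMap ∘ₗ K.mulVecLin

theorem lassoFunctional_euclideanMulVec (K : Matrix m ι ℝ) (y : m → ℝ) (lam : ℝ) (x : ι → ℝ) :
    lassoFunctional (euclideanMulVec K) (WithLp.toLp 2 y) lam x =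
      (∑ j, ((K *ᵥ x) j - y j) ^ 2) + 2 * lam * ∑ i, |x i| := by
  simp [lassoFunctional, euclideanMulVec, EuclideanSpace.real_norm_sq_eq]

theorem inner_euclideanMulVec_single [DecidableEq ι] (K : Matrix m ι ℝ) (y : m → ℝ) (i : ι) :
    ⟪euclideanMulVec K (Pi.single i 1), WithLp.toLp 2 y⟫ = (Kᵀ *ᵥ y) i := by
  calc ⟪euclideanMulVec K (Pi.single i 1), WithLp.toLp 2 y⟫ = y ⬝ᵥ K.col i := by
        simp [euclideanMulVec, EuclideanSpace.inner_toLp_toLp]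
    _ = (Kᵀ *ᵥ y) i := dotProduct_comm _ _

end Matrix

/-- The zero vector minimizes the lasso functional
`F_λ(x) = ‖Kx − y‖² + 2λ‖x‖₁` over `ℝᵖ` iff `λ ≥ max_i |(Kᵀy)_i|`. -/
theorem zero_is_lasso_minimizer_iff (n p : ℕ) (K : Matrix (Fin n) (Fin p) ℝ)
    (y : Fin n → ℝ) (lam : ℝ) (hlam : 0 < lam) :
    (∀ x : Fin p → ℝ,
        (∑ j, (K.mulVec (0 : Fin p → ℝ) j - y j) ^ 2)
            + 2 * lam * ∑ i, |(0 : Fin p → ℝ) i|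
          ≤ (∑ j, (K.mulVec x j - y j) ^ 2) + 2 * lam * ∑ i, |x i|)
      ↔ (⨆ i : Fin p, |K.transpose.mulVec y i|) ≤ lam := by
  simpa only [lassoFunctional_euclideanMulVec, inner_euclideanMulVec_single] using
    zero_is_lasso_minimizer_iff_general (euclideanMulVec K) (WithLp.toLp 2 y) hlam.le
end

section
/- Let K be a real n×p matrix, y ∈ ℝⁿ, and λ > 0. A vector x̄ ∈ ℝᵖ is a minimizer of F_λ(x) = ‖Kx − y‖² + 2λ‖x‖₁ over ℝᵖ if and only if, for every index i: (Kᵀ(y − Kx̄))_i = λ·sgn(x̄_i) whenever x̄_i ≠ 0, and |(Kᵀ(y − Kx̄))_i| ≤ λ whenever x̄_i = 0. -/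
open Finset

/-!
Expanding the square around `x` writes the increment of `½‖K · − y‖²` as a linear term given by
`−Kᵀ(y − Kx)` plus a nonnegative term that is quadratic in the displacement. Along a segment the
quadratic term is of second order, while a convex penalty increases at most linearly; so `x`
minimizes `½‖K · − y‖² + φ` exactly when `Kᵀ(y − Kx)` is a subgradient of `φ` at `x`.
For `φ = λ‖·‖₁` the subgradient condition decouples into the coordinates, where it says that
`(Kᵀ(y − Kx))_i` has modulus at most `λ` and attains equality in `g * x_i ≤ λ * |x_i|`.
-/

/-- The linear functional `ℓ` is a subgradient of `φ` at `x`, i.e. it belongs to the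
subdifferential `∂φ(x)`. Subgradients are functionals rather than vectors, so that one notion
serves for `ℝ` and for `ι → ℝ`, the latter not being an inner product space in Mathlib. -/
def IsSubgradientAt {E : Type*} [AddCommGroup E] [Module ℝ E]
    (φ : E → ℝ) (ℓ : Module.Dual ℝ E) (x : E) : Prop :=
  ∀ z, ℓ (z - x) ≤ φ z - φ x

theorem le_of_forall_mul_le_mul_add_mul_sq {a b c : ℝ}
    (h : ∀ t ∈ Set.Ioo (0 : ℝ) 1, t * a ≤ t * b + t ^ 2 * c) : a ≤ b := by
  have tendsto_right : Filter.Tendsto (fun t : ℝ => b + t * c) (nhdsWithin 0 (Set.Ioi 0))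
      (nhds b) := by
    have hcont : Continuous fun t : ℝ => b + t * c := by fun_prop
    simpa using (hcont.tendsto 0).mono_left nhdsWithin_le_nhds
  refine ge_of_tendsto tendsto_right ?_
  filter_upwards [Ioo_mem_nhdsGT (zero_lt_one' ℝ)] with t ht
  refine le_of_mul_le_mul_left ?_ ht.1
  linarith [h t ht]

theorem isSubgradientAt_iff_forall_le_add_sq_homogeneous {E : Type*} [AddCommGroup E]
    [Module ℝ E] {φ q : E → ℝ} {ℓ : Module.Dual ℝ E} {x : E}
    (hφ : ConvexOn ℝ Set.univ φ) (q_nonneg : ∀ v, 0 ≤ q v)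
    (q_smul : ∀ (t : ℝ) v, q (t • v) = t ^ 2 * q v) :
    IsSubgradientAt φ ℓ x ↔ ∀ z, ℓ (z - x) ≤ φ z - φ x + q (z - x) := by
  refine ⟨fun h z => (h z).trans (le_add_of_nonneg_right (q_nonneg _)), fun h z => ?_⟩
  refine le_of_forall_mul_le_mul_add_mul_sq (c := q (z - x)) fun t ht => ?_
  have convex_bound : φ (x + t • (z - x)) - φ x ≤ t * (φ z - φ x) := by
    have hconv := hφ.2 (Set.mem_univ x) (Set.mem_univ z) (sub_nonneg.2 ht.2.le) ht.1.le
      (sub_add_cancel 1 t)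
    rw [show (1 - t) • x + t • z = x + t • (z - x) by module] at hconv
    simp only [smul_eq_mul] at hconv
    linarith
  calc t * ℓ (z - x) = ℓ (x + t • (z - x) - x) := by simp
    _ ≤ φ (x + t • (z - x)) - φ x + q (x + t • (z - x) - x) := h _
    _ ≤ t * (φ z - φ x) + t ^ 2 * q (z - x) := by
      rw [add_sub_cancel_left, q_smul]
      gcongr

theorem isSubgradientAt_sum_iff {ι : Type*} [Fintype ι] {E : ι → Type*}
    [∀ i, AddCommGroup (E i)] [∀ i, Module ℝ (E i)] {φ : ∀ i, E i → ℝ}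
    {ℓ : ∀ i, Module.Dual ℝ (E i)} {x : ∀ i, E i} :
    IsSubgradientAt (fun z : ∀ i, E i => ∑ i, φ i (z i)) (∑ i, ℓ i ∘ₗ LinearMap.proj i) x ↔
      ∀ i, IsSubgradientAt (φ i) (ℓ i) (x i) := by
  classical
  simp only [IsSubgradientAt, LinearMap.sum_apply, LinearMap.comp_apply, LinearMap.proj_apply,
    Pi.sub_apply, ← sum_sub_distrib]
  refine ⟨fun h i z => ?_, fun h z => sum_le_sum fun i _ => h i (z i)⟩
  have hz := h (Function.update x i z)
  rwa [Fintype.sum_eq_single i fun j hj => by simp [hj],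
    Fintype.sum_eq_single i fun j hj => by simp [hj], Function.update_self] at hz

theorem isSubgradientAt_const_mul_norm_iff {E : Type*} [SeminormedAddCommGroup E]
    [NormedSpace ℝ E] {c : ℝ} {ℓ : Module.Dual ℝ E} {x : E} :
    IsSubgradientAt (fun z => c * ‖z‖) ℓ x ↔ (∀ v, ℓ v ≤ c * ‖v‖) ∧ ℓ x = c * ‖x‖ := by
  simp only [IsSubgradientAt, map_sub]
  constructor
  · intro h
    have at_zero : 0 - ℓ x ≤ 0 - c * ‖x‖ := by simpa using h 0
    have at_double : 2 * ℓ x - ℓ x ≤ c * (2 * ‖x‖) - c * ‖x‖ := by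
      simpa [norm_smul] using h ((2 : ℝ) • x)
    have attained : ℓ x = c * ‖x‖ := by linarith
    exact ⟨fun v => by linarith [h v], attained⟩
  · rintro ⟨bound, attained⟩ z
    linarith [bound z]

theorem forall_mul_le_mul_abs_iff {R : Type*} [CommRing R] [LinearOrder R]
    [IsStrictOrderedRing R] {c g : R} : (∀ v, g * v ≤ c * |v|) ↔ |g| ≤ c := by
  refine ⟨fun h => abs_le'.2 ⟨by simpa using h 1, by simpa using h (-1)⟩, fun h v => ?_⟩
  calc g * v ≤ |g| * |v| := (le_abs_self _).trans_eq (abs_mul g v)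
    _ ≤ c * |v| := by gcongr

theorem mul_eq_mul_abs_iff_eq_mul_sign {c g x : ℝ} (hx : x ≠ 0) :
    g * x = c * |x| ↔ g = c * Real.sign x := by
  have abs_eq : |x| = Real.sign x * x := by
    rcases hx.lt_or_gt with hneg | hpos
    · rw [Real.sign_of_neg hneg, abs_of_neg hneg, neg_one_mul]
    · rw [Real.sign_of_pos hpos, abs_of_pos hpos, one_mul]
  rw [abs_eq, ← mul_assoc, mul_left_inj' hx]

theorem isSubgradientAt_const_mul_abs_iff {c g x : ℝ} (hc : 0 ≤ c) :
    IsSubgradientAt (fun z => c * |z|) (g • LinearMap.id) x ↔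
      (x ≠ 0 → g = c * Real.sign x) ∧ (x = 0 → |g| ≤ c) := by
  have norm_iff := isSubgradientAt_const_mul_norm_iff (c := c) (ℓ := g • LinearMap.id) (x := x)
  simp only [Real.norm_eq_abs, LinearMap.smul_apply, LinearMap.id_apply, smul_eq_mul,
    forall_mul_le_mul_abs_iff] at norm_iff
  rw [norm_iff]
  rcases eq_or_ne x 0 with rfl | hx
  · simp
  · have abs_le_of_eq : g = c * Real.sign x → |g| ≤ c := by
      rintro rfl
      rcases Real.sign_apply_eq_of_ne_zero x hx with hsign | hsign <;>
        simp [hsign, abs_of_nonneg hc]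
    simpa [hx, mul_eq_mul_abs_iff_eq_mul_sign hx] using abs_le_of_eq

section LeastSquares

variable {m ι : Type*} [Fintype m] [Fintype ι]

theorem sum_sq_mulVec_sub_eq {R : Type*} [CommRing R] (K : Matrix m ι R) (y : m → R)
    (x z : ι → R) :
    ∑ j, (K.mulVec z j - y j) ^ 2 = ∑ j, (K.mulVec x j - y j) ^ 2
      - 2 * (K.transpose.mulVec (y - K.mulVec x) ⬝ᵥ (z - x))
      + ∑ j, K.mulVec (z - x) j ^ 2 := by
  rw [Matrix.mulVec_transpose, ← Matrix.dotProduct_mulVec, dotProduct, mul_sum,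
    ← sum_sub_distrib, ← sum_add_distrib]
  refine sum_congr rfl fun j _ => ?_
  simp only [Matrix.mulVec_sub, Pi.sub_apply]
  ring

theorem forall_sum_sq_add_le_iff_isSubgradientAt {K : Matrix m ι ℝ} {y : m → ℝ}
    {φ : (ι → ℝ) → ℝ} {x : ι → ℝ} (hφ : ConvexOn ℝ Set.univ φ) :
    (∀ z, ∑ j, (K.mulVec x j - y j) ^ 2 + 2 * φ x
        ≤ ∑ j, (K.mulVec z j - y j) ^ 2 + 2 * φ z) ↔
      IsSubgradientAt φ
        (dotProductBilin ℝ ℝ (K.transpose.mulVec (y - K.mulVec x))) x := by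
  rw [isSubgradientAt_iff_forall_le_add_sq_homogeneous (q := fun v => (∑ j, K.mulVec v j ^ 2) / 2)
    hφ (fun v => by positivity)
    (fun t v => by simp [Matrix.mulVec_smul, mul_pow, ← mul_sum, mul_div_assoc])]
  refine forall_congr' fun z => ?_
  rw [sum_sq_mulVec_sub_eq K y x z, dotProductBilin_apply_apply]
  constructor <;> intro h <;> linarith

theorem convexOn_sum_const_mul_abs {c : ℝ} (hc : 0 ≤ c) :
    ConvexOn ℝ Set.univ fun x : ι → ℝ => ∑ i, c * |x i| := by
  have convex_l1 := (convexOn_univ_norm (E := PiLp 1 fun _ : ι => ℝ)).comp_linearMap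
    (WithLp.linearEquiv 1 ℝ (ι → ℝ)).symm.toLinearMap
  simpa [Function.comp_def, PiLp.norm_eq_of_L1, mul_sum] using convex_l1.smul hc

theorem dotProductBilin_eq_sum_smul_proj {R : Type*} [CommSemiring R] (g : ι → R) :
    dotProductBilin R R g = ∑ i, (g i • LinearMap.id) ∘ₗ LinearMap.proj i := by
  ext; simp [dotProduct]

theorem lasso_minimizer_iff_optimality_conditions_general (K : Matrix m ι ℝ) (y : m → ℝ)
    {lam : ℝ} (hlam : 0 ≤ lam) (xbar : ι → ℝ) :
    (∀ x : ι → ℝ,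
        (∑ j, (K.mulVec xbar j - y j) ^ 2) + 2 * lam * ∑ i, |xbar i|
          ≤ (∑ j, (K.mulVec x j - y j) ^ 2) + 2 * lam * ∑ i, |x i|)
      ↔ ∀ i,
          (xbar i ≠ 0 →
            K.transpose.mulVec (y - K.mulVec xbar) i = lam * Real.sign (xbar i)) ∧
          (xbar i = 0 →
            |K.transpose.mulVec (y - K.mulVec xbar) i| ≤ lam) := by
  simp only [mul_assoc, mul_sum univ _ lam]
  rw [forall_sum_sq_add_le_iff_isSubgradientAt (convexOn_sum_const_mul_abs hlam),
    dotProductBilin_eq_sum_smul_proj, isSubgradientAt_sum_iff (φ := fun _ z => lam * |z|)]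
  exact forall_congr' fun i => isSubgradientAt_const_mul_abs_iff hlam

end LeastSquares

/-- `x̄` minimizes the lasso functional `F_λ(x) = ‖Kx − y‖² + 2λ‖x‖₁`
iff for every `i` : `(Kᵀ(y − Kx̄))_i = λ sgn(x̄_i)` when `x̄_i ≠ 0`, and
`|(Kᵀ(y − Kx̄))_i| ≤ λ` when `x̄_i = 0`. -/
theorem lasso_minimizer_iff_optimality_conditions (n p : ℕ)
    (K : Matrix (Fin n) (Fin p) ℝ) (y : Fin n → ℝ) (lam : ℝ) (hlam : 0 < lam)
    (xbar : Fin p → ℝ) :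
    (∀ x : Fin p → ℝ,
        (∑ j, (K.mulVec xbar j - y j) ^ 2) + 2 * lam * ∑ i, |xbar i|
          ≤ (∑ j, (K.mulVec x j - y j) ^ 2) + 2 * lam * ∑ i, |x i|)
      ↔ ∀ i : Fin p,
          (xbar i ≠ 0 →
            K.transpose.mulVec (y - K.mulVec xbar) i = lam * Real.sign (xbar i)) ∧
          (xbar i = 0 →
            |K.transpose.mulVec (y - K.mulVec xbar) i| ≤ lam) := by
  exact lasso_minimizer_iff_optimality_conditions_general K y hlam.le xbar
end

section
/- Let K be a real n×p matrix, y ∈ ℝⁿ, and ρ ≥ 0. If x̃ is a minimizer of ‖Kx − y‖² over the ℓ₁-ball {x ∈ ℝᵖ : ‖x‖₁ ≤ ρ}, then x̃ is a minimizer over all of ℝᵖ of the penalized functional F_λ(x) = ‖Kx − y‖² + 2λ‖x‖₁ with λ = max_i |(Kᵀ(y − Kx̃))_i| = ‖Kᵀ(y − Kx̃)‖_∞. -/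
open Finset

/-!
Let `f x = ‖K x - y‖²`. Optimality of `x̃` on the ball of radius `ρ` says that the linear functional
`-f' x̃` attains its maximum over the ball at `x̃`, i.e. `ρ ‖f' x̃‖ ≤ -f' x̃ x̃`: it is aligned with
`x̃`. Adding this to the gradient inequality `f x ≥ f x̃ + f' x̃ (x - x̃)` shows that `x̃` minimizes
`f + ‖f' x̃‖ ‖·‖`. This works for any norm; for the `ℓ₁` norm the dual norm of
`f' x̃ = -2 Kᵀ(y - K x̃)` is twice the largest absolute value of an entry of `Kᵀ(y - K x̃)`.
-/

open Metric Set

section NormPenalty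

variable {E : Type*} [NormedAddCommGroup E] [NormedSpace ℝ E]
  {f : E → ℝ} {f' : E →L[ℝ] ℝ} {s : Set E} {a x : E} {ρ : ℝ}

theorem hasFDerivWithinAt_apply_sub_le_of_convexOn (hf : ConvexOn ℝ s f)
    (hf' : HasFDerivWithinAt f f' s a) (ha : a ∈ s) (hx : x ∈ s) :
    f' (x - a) ≤ f x - f a := by
  let line : ℝ →ᵃ[ℝ] E := AffineMap.lineMap a x
  have line_zero : line 0 = a := AffineMap.lineMap_apply_zero a x
  have line_one : line 1 = x := AffineMap.lineMap_apply_one a x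
  have derivative_along_line : HasDerivWithinAt (f ∘ line) (f' (x - a)) (line ⁻¹' s) 0 :=
    HasFDerivWithinAt.comp_hasDerivWithinAt_of_eq 0 hf' AffineMap.hasDerivWithinAt_lineMap
      (mapsTo_preimage line s) line_zero.symm
  simpa [slope_def_field, line_zero, line_one] using
    (hf.comp_affineMap line).le_slope_of_hasDerivWithinAt (x := 0) (y := 1)
      (by simpa [line_zero] using ha) (by simpa [line_one] using hx) one_pos derivative_along_line

theorem mul_norm_le_neg_apply_of_isMinOn_closedBall (hmin : IsMinOn f (closedBall 0 ρ) a)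
    (hf' : HasFDerivWithinAt f f' (closedBall 0 ρ) a) (ha : a ∈ closedBall 0 ρ) :
    ρ * ‖f'‖ ≤ -f' a := by
  have hρ : 0 ≤ ρ := nonempty_closedBall.mp ⟨a, ha⟩
  have apply_le {z : E} (hz : z ∈ closedBall 0 ρ) : -f' z ≤ -f' a := by
    have := hmin.localize.hasFDerivWithinAt_nonneg hf'
      (sub_mem_posTangentConeAt_of_segment_subset
        ((convex_closedBall (0 : E) ρ).segment_subset ha hz))
    rw [map_sub] at this
    linarith
  have abs_apply_le {z : E} (hz : z ∈ closedBall 0 ρ) : |f' z| ≤ -f' a :=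
    abs_le'.mpr ⟨by simpa using apply_le (z := -z) (by simpa using hz), apply_le hz⟩
  calc ρ * ‖f'‖ = ‖ρ • f'‖ := by rw [norm_smul, Real.norm_of_nonneg hρ]
    _ ≤ -f' a := by
      refine ContinuousLinearMap.opNorm_le_of_unit_norm ((abs_nonneg _).trans (abs_apply_le ha))
        fun z hz ↦ ?_
      simpa using abs_apply_le (z := ρ • z) (by simp [norm_smul, hz, abs_of_nonneg hρ])

theorem isMinOn_univ_add_norm_mul_norm_of_isMinOn_closedBall (hf : ConvexOn ℝ univ f)
    (hf' : HasFDerivAt f f' a) (ha : a ∈ closedBall 0 ρ) (hmin : IsMinOn f (closedBall 0 ρ) a) :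
    IsMinOn (fun x ↦ f x + ‖f'‖ * ‖x‖) univ a := by
  refine isMinOn_univ_iff.mpr fun x ↦ ?_
  have gradient_inequality : f' x - f' a ≤ f x - f a := by
    simpa using hasFDerivWithinAt_apply_sub_le_of_convexOn hf hf'.hasFDerivWithinAt
      (mem_univ a) (mem_univ x)
  calc f a + ‖f'‖ * ‖a‖ ≤ f a + ρ * ‖f'‖ := by
        rw [mul_comm ρ]
        gcongr
        exact mem_closedBall_zero_iff.mp ha
    _ ≤ f a - f' a := by
        linarith [mul_norm_le_neg_apply_of_isMinOn_closedBall hmin hf'.hasFDerivWithinAt ha]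
    _ ≤ f x - f' x := by linarith
    _ ≤ f x + ‖f'‖ * ‖x‖ := by linarith [neg_le_of_abs_le (f'.le_opNorm x)]

end NormPenalty

section LeastSquares

theorem convexOn_norm_apply_sub_sq {E F : Type*} [AddCommGroup E] [Module ℝ E]
    [SeminormedAddCommGroup F] [NormedSpace ℝ F] (K : E →ₗ[ℝ] F) (y : F) :
    ConvexOn ℝ univ fun x ↦ ‖K x - y‖ ^ 2 := by
  simpa [Function.comp_def, sub_eq_add_neg] using
    ((convexOn_univ_norm.pow (fun _ _ ↦ norm_nonneg _) 2).translate_left (-y)).comp_linearMap K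

variable {E F : Type*} [NormedAddCommGroup E] [NormedSpace ℝ E]
  [NormedAddCommGroup F] [InnerProductSpace ℝ F]

theorem hasFDerivAt_norm_apply_sub_sq (K : E →L[ℝ] F) (y : F) (a : E) :
    HasFDerivAt (fun x ↦ ‖K x - y‖ ^ 2) (-(2 : ℝ) • (innerSL ℝ (y - K a) ∘L K)) a := by
  convert (K.hasFDerivAt.sub_const y).norm_sq using 1
  rw [← neg_sub y (K a), map_neg, ContinuousLinearMap.neg_comp, smul_neg, neg_smul, two_smul,
    two_smul]

theorem constrained_minimizer_is_lasso_minimizer_general (K : E →L[ℝ] F) (y : F) {ρ : ℝ} {xt : E}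
    (hxt : xt ∈ closedBall 0 ρ) (hmin : IsMinOn (fun x ↦ ‖K x - y‖ ^ 2) (closedBall 0 ρ) xt) :
    IsMinOn (fun x ↦ ‖K x - y‖ ^ 2 + 2 * ‖innerSL ℝ (y - K xt) ∘L K‖ * ‖x‖) univ xt := by
  simpa [norm_smul] using isMinOn_univ_add_norm_mul_norm_of_isMinOn_closedBall
    (convexOn_norm_apply_sub_sq K.toLinearMap y) (hasFDerivAt_norm_apply_sub_sq K y xt) hxt hmin

end LeastSquares

section EllOne

variable {ι κ : Type*} [Fintype ι] [DecidableEq ι] [Fintype κ]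

theorem opNorm_piLp_one_eq_iSup {𝕜 G : Type*} [NontriviallyNormedField 𝕜]
    [SeminormedAddCommGroup G] [NormedSpace 𝕜 G] (φ : PiLp 1 (fun _ : ι ↦ 𝕜) →L[𝕜] G) :
    ‖φ‖ = ⨆ i, ‖φ (PiLp.single 1 i 1)‖ := by
  apply le_antisymm
  · refine φ.opNorm_le_bound (Real.iSup_nonneg fun i ↦ norm_nonneg _) fun x ↦ ?_
    calc ‖φ x‖ = ‖∑ i, x i • φ (PiLp.single 1 i 1)‖ := by
          conv_lhs => rw [← (PiLp.basisFun 1 𝕜 ι).sum_repr x]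
          simp
      _ ≤ ∑ i, ‖x i‖ * ‖φ (PiLp.single 1 i 1)‖ := by
          simpa only [norm_smul] using norm_sum_le univ fun i ↦ x i • φ (PiLp.single 1 i 1)
      _ ≤ ∑ i, ‖x i‖ * ⨆ j, ‖φ (PiLp.single 1 j 1)‖ := by
          gcongr with i
          exact le_ciSup (f := fun j ↦ ‖φ (PiLp.single 1 j 1)‖) (finite_range _).bddAbove i
      _ = (⨆ j, ‖φ (PiLp.single 1 j 1)‖) * ‖x‖ := by
          rw [← sum_mul, PiLp.norm_eq_of_L1, mul_comm]
  · exact Real.iSup_le (fun i ↦ φ.unit_le_opNorm _ (by simp)) (norm_nonneg φ)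

theorem norm_innerSL_comp_toLpLin_one_two (K : Matrix κ ι ℝ) (r : EuclideanSpace ℝ κ) :
    ‖innerSL ℝ r ∘L (K.toLpLin 1 2).toContinuousLinearMap‖ =
      ⨆ i, |K.transpose.mulVec r.ofLp i| := by
  rw [opNorm_piLp_one_eq_iSup]
  refine iSup_congr fun i ↦ ?_
  simp [Matrix.toLpLin_apply, Matrix.mulVec, dotProduct, PiLp.inner_apply]

theorem norm_toLpLin_sub_sq {q : ENNReal} (K : Matrix κ ι ℝ) (y : EuclideanSpace ℝ κ)
    (x : PiLp q fun _ : ι ↦ ℝ) :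
    ‖K.toLpLin q 2 x - y‖ ^ 2 = ∑ j, (K.mulVec x.ofLp j - y j) ^ 2 := by
  simp [EuclideanSpace.real_norm_sq_eq]

end EllOne

/-- If `x̃` minimizes `‖Kx − y‖²` over the ℓ₁-ball of radius `ρ`,
then `x̃` minimizes the penalized functional `F_λ(x) = ‖Kx − y‖² + 2λ‖x‖₁`
over all of `ℝᵖ`, with `λ = max_i |(Kᵀ(y − Kx̃))_i|`. -/
theorem constrained_minimizer_is_lasso_minimizer (n p : ℕ)
    (K : Matrix (Fin n) (Fin p) ℝ) (y : Fin n → ℝ) (ρ : ℝ) (hρ : 0 ≤ ρ)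
    (xt : Fin p → ℝ) (hxt : (∑ i, |xt i|) ≤ ρ)
    (hmin : ∀ x : Fin p → ℝ, (∑ i, |x i|) ≤ ρ →
        (∑ j, (K.mulVec xt j - y j) ^ 2) ≤ ∑ j, (K.mulVec x j - y j) ^ 2) :
    ∀ x : Fin p → ℝ,
      (∑ j, (K.mulVec xt j - y j) ^ 2)
          + 2 * (⨆ i : Fin p, |K.transpose.mulVec (y - K.mulVec xt) i|) * ∑ i, |xt i|
        ≤ (∑ j, (K.mulVec x j - y j) ^ 2)
          + 2 * (⨆ i : Fin p, |K.transpose.mulVec (y - K.mulVec xt) i|) * ∑ i, |x i| := by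
  intro x
  have lasso_minimizer := constrained_minimizer_is_lasso_minimizer_general
    (K.toLpLin 1 2).toContinuousLinearMap (WithLp.toLp 2 y) (ρ := ρ) (xt := WithLp.toLp 1 xt)
    (by simpa [PiLp.norm_eq_of_L1] using hxt)
    (isMinOn_iff.mpr fun z hz ↦ by
      simpa only [LinearMap.coe_toContinuousLinearMap', norm_toLpLin_sub_sq] using
        hmin z.ofLp (by simpa [PiLp.norm_eq_of_L1] using hz))
  simpa only [LinearMap.coe_toContinuousLinearMap', norm_toLpLin_sub_sq,
    norm_innerSL_comp_toLpLin_one_two, WithLp.ofLp_sub, Matrix.ofLp_toLpLin, Matrix.toLin'_apply,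
    PiLp.norm_eq_of_L1, Real.norm_eq_abs] using
    isMinOn_univ_iff.mp lasso_minimizer (WithLp.toLp 1 x)
end

section
/- Let K be a real n×p matrix with operator norm ‖K‖ < √2, y ∈ ℝⁿ, and λ > 0. For any initial vector x⁽⁰⁾ ∈ ℝᵖ, the iterative soft-thresholding sequence x⁽ᵏ⁺¹⁾ = S_λ[x⁽ᵏ⁾ + Kᵀ(y − Kx⁽ᵏ⁾)] converges to a minimizer of the functional F_λ(x) = ‖Kx − y‖² + 2λ‖x‖₁ over ℝᵖ. -/
open Finset Filter

/-- The soft-thresholding operator `S_λ`, acting componentwise: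
`(S_λ[b])_i = b_i − λ·sgn(b_i)` if `|b_i| > λ`, and `0` otherwise. -/
noncomputable def softThreshold (p : ℕ) (lam : ℝ) (b : Fin p → ℝ) : Fin p → ℝ :=
  fun i => if lam < |b i| then b i - lam * Real.sign (b i) else 0

/-!
Soft-thresholding is the proximal map of `λ‖·‖₁`, so one step of the iteration is
`T x = P (x + A†(y - A x))` with `P` a proximal map. The variational inequality characterising `P`
bounds `Φ u - Φ w` for `u = T x` and every `w`, where `Φ` is the penalized functional. At `w = x`
the bound says that a step decreases `Φ` by at least `(2 - ‖A‖²)‖u - x‖²`, so consecutive iterates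
become arbitrarily close and every minimizer is fixed by `T`; at `u = x` it says that every fixed
point of `T` is a minimizer. As `T` is also nonexpansive, the iterates never move away from a fixed
point: they are bounded, any cluster point is fixed by `T`, and the distance to that cluster point
decreases to `0`.
-/

open Function Topology WithLp
open scoped RealInnerProductSpace InnerProduct

section FixedPointIteration

variable {X : Type*} {T : X → X} {x : ℕ → X} {z : X}

theorem antitone_dist_of_isFixedPt [PseudoMetricSpace X] (hT : LipschitzWith 1 T)
    (hx : ∀ k, x (k + 1) = T (x k)) (hz : IsFixedPt T z) : Antitone fun k => dist (x k) z :=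
  antitone_nat_of_succ_le fun k => by
    calc dist (x (k + 1)) z = dist (T (x k)) (T z) := by rw [hx, hz.eq]
      _ ≤ dist (x k) z := by simpa only [NNReal.coe_one, one_mul] using hT.dist_le_mul (x k) z

theorem isFixedPt_of_tendsto_subseq [MetricSpace X] {φ : ℕ → ℕ} (hT : Continuous T)
    (hx : ∀ k, x (k + 1) = T (x k))
    (hreg : Tendsto (fun k => dist (x (k + 1)) (x k)) atTop (𝓝 0))
    (hφ : Tendsto φ atTop atTop) (hz : Tendsto (x ∘ φ) atTop (𝓝 z)) : IsFixedPt T z := by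
  have hdist : Tendsto (fun k => dist (T (x (φ k))) (x (φ k))) atTop (𝓝 (dist (T z) z)) :=
    ((hT.tendsto z).comp hz).dist hz
  have hzero : Tendsto (fun k => dist (T (x (φ k))) (x (φ k))) atTop (𝓝 0) := by
    simpa only [hx, Function.comp_def] using hreg.comp hφ
  exact dist_eq_zero.1 (tendsto_nhds_unique hdist hzero)

theorem exists_isFixedPt_tendsto_of_asymptoticallyRegular [MetricSpace X] [ProperSpace X]
    (hT : LipschitzWith 1 T) (hfix : (fixedPoints T).Nonempty) (hx : ∀ k, x (k + 1) = T (x k))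
    (hreg : Tendsto (fun k => dist (x (k + 1)) (x k)) atTop (𝓝 0)) :
    ∃ z, IsFixedPt T z ∧ Tendsto x atTop (𝓝 z) := by
  obtain ⟨w, hw⟩ := hfix
  have hbdd (k : ℕ) : x k ∈ Metric.closedBall w (dist (x 0) w) :=
    antitone_dist_of_isFixedPt hT hx hw k.zero_le
  obtain ⟨z, -, φ, hφ, hz⟩ := (isCompact_closedBall w _).tendsto_subseq hbdd
  have hzfix := isFixedPt_of_tendsto_subseq hT.continuous hx hreg hφ.tendsto_atTop hz
  refine ⟨z, hzfix, tendsto_iff_dist_tendsto_zero.2 ?_⟩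
  exact (tendsto_iff_tendsto_subseq_of_antitone (antitone_dist_of_isFixedPt hT hx hzfix)
    hφ.tendsto_atTop).2 (tendsto_iff_dist_tendsto_zero.1 hz)

end FixedPointIteration

theorem tendsto_sub_succ_of_antitone {f : ℕ → ℝ} (hf : Antitone f)
    (hbdd : BddBelow (Set.range f)) : Tendsto (fun k => f k - f (k + 1)) atTop (𝓝 0) := by
  have hlim := tendsto_atTop_ciInf hf hbdd
  simpa only [sub_self, Function.comp_def] using hlim.sub (hlim.comp (tendsto_add_atTop_nat 1))

section ProximalMap

variable {E : Type*} [NormedAddCommGroup E] [InnerProductSpace ℝ E] {P : E → E} {g : E → ℝ}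

/-- `P` is a proximal map of `g`: `P b` minimizes `w ↦ ‖w - b‖² / 2 + g w`. For convex `g` this is
equivalent to the variational inequality used here as the definition, which says that `b - P b` is a
subgradient of `g` at `P b`. -/
def IsProxMap (P : E → E) (g : E → ℝ) : Prop :=
  ∀ b w, ⟪b - P b, w - P b⟫ ≤ g w - g (P b)

theorem IsProxMap.norm_sub_sq_le_inner (hP : IsProxMap P g) (a b : E) :
    ‖P a - P b‖ ^ 2 ≤ ⟪a - b, P a - P b⟫ := by
  have hsum : ⟪a - P a, P b - P a⟫ + ⟪b - P b, P a - P b⟫ ≤ 0 := by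
    linarith [hP a (P b), hP b (P a)]
  have hexpand : ⟪a - P a, P b - P a⟫ + ⟪b - P b, P a - P b⟫ =
      ‖P a - P b‖ ^ 2 - ⟪a - b, P a - P b⟫ := by
    rw [← neg_sub (P a) (P b), inner_neg_right, ← real_inner_self_eq_norm_sq]
    simp only [inner_sub_left]
    ring
  linarith

theorem IsProxMap.lipschitzWith_one (hP : IsProxMap P g) : LipschitzWith 1 P := by
  refine LipschitzWith.mk_one fun a b => ?_
  rw [dist_eq_norm, dist_eq_norm]
  have hcauchy : ‖P a - P b‖ ^ 2 ≤ ‖a - b‖ * ‖P a - P b‖ :=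
    (hP.norm_sub_sq_le_inner a b).trans (real_inner_le_norm _ _)
  rcases (norm_nonneg (P a - P b)).eq_or_lt with hzero | hpos
  · exact hzero ▸ norm_nonneg _
  · exact le_of_mul_le_mul_right (by rwa [← sq]) hpos

end ProximalMap

section PenalizedLeastSquares

variable {E F : Type*} [NormedAddCommGroup E] [InnerProductSpace ℝ E]
  [NormedAddCommGroup F] [InnerProductSpace ℝ F]

/-- The functional `‖A x - y‖² + 2 g x`; the lasso functional is the case `g = λ‖·‖₁`. -/
def penalizedLeastSquares (A : E →L[ℝ] F) (y : F) (g : E → ℝ) (x : E) : ℝ :=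
  ‖A x - y‖ ^ 2 + 2 * g x

theorem exists_isMinOn_penalizedLeastSquares {g : E → ℝ} (A : E →L[ℝ] F) (y : F)
    (hcont : Continuous g) (hcoercive : Tendsto g (cocompact E) atTop) :
    ∃ z, IsMinOn (penalizedLeastSquares A y g) Set.univ z := by
  have hF : Continuous (penalizedLeastSquares A y g) := by
    unfold penalizedLeastSquares
    fun_prop
  have hlower (x : E) : 2 * g x ≤ penalizedLeastSquares A y g x :=
    le_add_of_nonneg_left (sq_nonneg _)
  obtain ⟨z, hz⟩ := hF.exists_forall_le
    (tendsto_atTop_mono hlower (hcoercive.const_mul_atTop two_pos))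
  exact ⟨z, isMinOn_univ_iff.2 hz⟩

theorem norm_apply_sub_sq_eq (A : E →L[ℝ] F) (y : F) (x w : E) :
    ‖A w - y‖ ^ 2 = ‖A x - y‖ ^ 2 + 2 * ⟪A x - y, A (w - x)⟫ + ‖A (w - x)‖ ^ 2 := by
  rw [← norm_add_sq_real, map_sub, add_comm, sub_add_sub_cancel]

variable [CompleteSpace E] [CompleteSpace F] {A : E →L[ℝ] F} {y : F} {P : E → E} {g : E → ℝ} {z : E}

/-- One step of the Landweber iteration, that is, of gradient descent with unit step size for
`‖A x - y‖² / 2`. -/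
noncomputable def landweberStep (A : E →L[ℝ] F) (y : F) (x : E) : E :=
  x + (A†) (y - A x)

theorem norm_sub_adjoint_apply_self_le (hA : ‖A‖ ^ 2 ≤ 2) (v : E) : ‖v - (A†) (A v)‖ ≤ ‖v‖ := by
  refine le_of_sq_le_sq ?_ (norm_nonneg v)
  have hadj : ‖(A†) (A v)‖ ^ 2 ≤ 2 * ‖A v‖ ^ 2 := by
    calc ‖(A†) (A v)‖ ^ 2 ≤ (‖A†‖ * ‖A v‖) ^ 2 := by gcongr; exact (A†).le_opNorm _
      _ = ‖A‖ ^ 2 * ‖A v‖ ^ 2 := by rw [LinearIsometryEquiv.norm_map, mul_pow]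
      _ ≤ 2 * ‖A v‖ ^ 2 := by gcongr
  rw [norm_sub_sq_real, ContinuousLinearMap.adjoint_inner_right, real_inner_self_eq_norm_sq]
  linarith

theorem lipschitzWith_one_landweberStep (hA : ‖A‖ ^ 2 ≤ 2) :
    LipschitzWith 1 (landweberStep A y) := by
  refine LipschitzWith.mk_one fun a b => ?_
  have hsub : landweberStep A y a - landweberStep A y b = (a - b) - (A†) (A (a - b)) := by
    simp only [landweberStep, map_sub]
    abel
  rw [dist_eq_norm, dist_eq_norm, hsub]
  exact norm_sub_adjoint_apply_self_le hA _

theorem IsProxMap.penalizedLeastSquares_sub_le (hP : IsProxMap P g) (x w : E) {u : E}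
    (hu : P (landweberStep A y x) = u) :
    penalizedLeastSquares A y g u - penalizedLeastSquares A y g w ≤
      2 * ⟪u - x, w - u⟫ + ‖A (u - x)‖ ^ 2 - ‖A (w - x)‖ ^ 2 := by
  have hvar : ⟪landweberStep A y x - u, w - u⟫ ≤ g w - g u := hu ▸ hP (landweberStep A y x) w
  have hinner : ⟪landweberStep A y x - u, w - u⟫ =
      -⟪u - x, w - u⟫ - ⟪A x - y, A (w - x)⟫ + ⟪A x - y, A (u - x)⟫ := by
    have hstep : landweberStep A y x - u = -(u - x) - (A†) (A x - y) := by
      simp only [landweberStep, map_sub]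
      abel
    rw [hstep, inner_sub_left, inner_neg_left, ContinuousLinearMap.adjoint_inner_left,
      ← sub_sub_sub_cancel_right w u x, map_sub A (w - x), inner_sub_right (A x - y)]
    ring
  unfold penalizedLeastSquares
  linarith [norm_apply_sub_sq_eq A y x u, norm_apply_sub_sq_eq A y x w]

theorem IsProxMap.penalizedLeastSquares_descent (hP : IsProxMap P g) (x : E) :
    (2 - ‖A‖ ^ 2) * ‖P (landweberStep A y x) - x‖ ^ 2 ≤
      penalizedLeastSquares A y g x - penalizedLeastSquares A y g (P (landweberStep A y x)) := by
  have hbound := hP.penalizedLeastSquares_sub_le (A := A) (y := y) x x rfl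
  set u := P (landweberStep A y x)
  have hinner : ⟪u - x, x - u⟫ = -‖u - x‖ ^ 2 := by
    rw [← neg_sub u x, inner_neg_right, real_inner_self_eq_norm_sq]
  have hop : ‖A (u - x)‖ ^ 2 ≤ ‖A‖ ^ 2 * ‖u - x‖ ^ 2 := by
    rw [← mul_pow]
    gcongr
    exact A.le_opNorm _
  rw [sub_self, map_zero, norm_zero, hinner] at hbound
  linarith

theorem IsProxMap.isMinOn_of_isFixedPt (hP : IsProxMap P g)
    (hz : IsFixedPt (P ∘ landweberStep A y) z) :
    IsMinOn (penalizedLeastSquares A y g) Set.univ z := by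
  refine isMinOn_univ_iff.2 fun w => ?_
  have hbound := hP.penalizedLeastSquares_sub_le z w hz
  rw [sub_self, inner_zero_left, map_zero, norm_zero] at hbound
  linarith [sq_nonneg ‖A (w - z)‖]

theorem IsProxMap.isFixedPt_of_isMinOn (hP : IsProxMap P g) (hA : ‖A‖ ^ 2 < 2)
    (hz : IsMinOn (penalizedLeastSquares A y g) Set.univ z) :
    IsFixedPt (P ∘ landweberStep A y) z := by
  have hstep : (2 - ‖A‖ ^ 2) * ‖P (landweberStep A y z) - z‖ ^ 2 ≤ 0 :=
    (hP.penalizedLeastSquares_descent z).trans (sub_nonpos.2 (isMinOn_univ_iff.1 hz _))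
  have hsq : ‖P (landweberStep A y z) - z‖ ^ 2 ≤ 0 :=
    nonpos_of_mul_nonpos_right hstep (sub_pos.2 hA)
  exact sub_eq_zero.1 (norm_eq_zero.1 (pow_eq_zero_iff two_ne_zero |>.1
    (hsq.antisymm (sq_nonneg _))))

theorem IsProxMap.tendsto_dist_succ (hP : IsProxMap P g) (hA : ‖A‖ ^ 2 < 2)
    (hbdd : BddBelow (Set.range (penalizedLeastSquares A y g))) {x : ℕ → E}
    (hx : ∀ k, x (k + 1) = P (landweberStep A y (x k))) :
    Tendsto (fun k => dist (x (k + 1)) (x k)) atTop (𝓝 0) := by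
  have hc : 0 < 2 - ‖A‖ ^ 2 := sub_pos.2 hA
  let f : ℕ → ℝ := penalizedLeastSquares A y g ∘ x
  have hdescent (k : ℕ) : (2 - ‖A‖ ^ 2) * dist (x (k + 1)) (x k) ^ 2 ≤ f k - f (k + 1) := by
    simpa only [f, Function.comp_apply, dist_eq_norm, hx] using
      hP.penalizedLeastSquares_descent (x k)
  have hanti : Antitone f := antitone_nat_of_succ_le fun k =>
    sub_nonneg.1 ((mul_nonneg hc.le (sq_nonneg _)).trans (hdescent k))
  have hgap : Tendsto (fun k => (f k - f (k + 1)) / (2 - ‖A‖ ^ 2)) atTop (𝓝 0) := by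
    simpa only [zero_div] using (tendsto_sub_succ_of_antitone hanti
      (hbdd.mono (Set.range_comp_subset_range x _))).div_const (2 - ‖A‖ ^ 2)
  have hsq : Tendsto (fun k => dist (x (k + 1)) (x k) ^ 2) atTop (𝓝 0) :=
    squeeze_zero (fun _ => sq_nonneg _) (fun k => (le_div_iff₀' hc).2 (hdescent k)) hgap
  simpa only [Real.sqrt_sq dist_nonneg, Real.sqrt_zero] using hsq.sqrt

end PenalizedLeastSquares

theorem IsProxMap.exists_isMinOn_tendsto {E F : Type*} [NormedAddCommGroup E]
    [InnerProductSpace ℝ E] [ProperSpace E] [NormedAddCommGroup F] [InnerProductSpace ℝ F]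
    [CompleteSpace F] {A : E →L[ℝ] F} {y : F} {P : E → E} {g : E → ℝ} (hP : IsProxMap P g)
    (hA : ‖A‖ ^ 2 < 2) (hmin : ∃ w, IsMinOn (penalizedLeastSquares A y g) Set.univ w)
    {x : ℕ → E} (hx : ∀ k, x (k + 1) = P (landweberStep A y (x k))) :
    ∃ z, IsMinOn (penalizedLeastSquares A y g) Set.univ z ∧ Tendsto x atTop (𝓝 z) := by
  obtain ⟨w, hw⟩ := hmin
  have hlip : LipschitzWith 1 (P ∘ landweberStep A y) := by
    simpa only [one_mul] using hP.lipschitzWith_one.comp (lipschitzWith_one_landweberStep hA.le)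
  have hbdd : BddBelow (Set.range (penalizedLeastSquares A y g)) :=
    ⟨_, Set.forall_mem_range.2 (isMinOn_univ_iff.1 hw)⟩
  obtain ⟨z, hz, hxz⟩ := exists_isFixedPt_tendsto_of_asymptoticallyRegular hlip
    ⟨w, hP.isFixedPt_of_isMinOn hA hw⟩ hx (hP.tendsto_dist_succ hA hbdd hx)
  exact ⟨z, hP.isMinOn_of_isFixedPt hz, hxz⟩

section SoftThreshold

variable {p : ℕ} {lam : ℝ}

theorem abs_sub_softThreshold_le (hlam : 0 ≤ lam) (b : Fin p → ℝ) (i : Fin p) :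
    |b i - softThreshold p lam b i| ≤ lam := by
  unfold softThreshold
  split_ifs with h
  · have hsign : |Real.sign (b i)| ≤ 1 := by
      rcases Real.sign_apply_eq (b i) with hs | hs | hs <;> simp [hs]
    rw [sub_sub_cancel, abs_mul, abs_of_nonneg hlam]
    exact mul_le_of_le_one_right hlam hsign
  · simpa only [sub_zero] using not_lt.1 h

theorem sub_softThreshold_mul_softThreshold (hlam : 0 ≤ lam) (b : Fin p → ℝ) (i : Fin p) :
    (b i - softThreshold p lam b i) * softThreshold p lam b i =
      lam * |softThreshold p lam b i| := by
  unfold softThreshold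
  split_ifs with h
  · rcases lt_abs.1 h with hpos | hneg
    · rw [Real.sign_of_pos (hlam.trans_lt hpos), abs_of_pos (by linarith)]
      ring
    · rw [Real.sign_of_neg (by linarith), abs_of_neg (by linarith)]
      ring
  · rw [mul_zero, abs_zero, mul_zero]

theorem isProxMap_softThreshold (hlam : 0 ≤ lam) :
    IsProxMap (fun b : EuclideanSpace ℝ (Fin p) => toLp 2 (softThreshold p lam (ofLp b)))
      (fun x => lam * ∑ i, |x i|) := by
  intro b w
  rw [PiLp.inner_apply, ← mul_sub, ← Finset.sum_sub_distrib, Finset.mul_sum]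
  refine Finset.sum_le_sum fun i _ => ?_
  set s := softThreshold p lam (ofLp b) i
  have hmul : (b i - s) * s = lam * |s| := sub_softThreshold_mul_softThreshold hlam (ofLp b) i
  have hbound : (b i - s) * w i ≤ lam * |w i| := by
    calc (b i - s) * w i ≤ |b i - s| * |w i| := (le_abs_self _).trans_eq (abs_mul _ _)
      _ ≤ lam * |w i| := by gcongr; exact abs_sub_softThreshold_le hlam (ofLp b) i
  calc (w i - s) * (b i - s) = (b i - s) * w i - (b i - s) * s := by ring
    _ ≤ lam * (|w i| - |s|) := by rw [hmul, mul_sub]; gcongr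

theorem tendsto_mul_sum_abs_cocompact_atTop {ι : Type*} [Fintype ι] (hlam : 0 < lam) :
    Tendsto (fun x : EuclideanSpace ℝ ι => lam * ∑ i, |x i|) (cocompact _) atTop := by
  refine (tendsto_atTop_mono (fun x => ?_) tendsto_norm_cocompact_atTop).const_mul_atTop hlam
  refine le_of_sq_le_sq ?_ (by positivity)
  rw [EuclideanSpace.norm_sq_eq]
  exact Finset.sum_sq_le_sq_sum_of_nonneg fun i _ => abs_nonneg _

end SoftThreshold

section Matrix

variable {m n : Type*} [Fintype m] [Fintype n] [DecidableEq n] (K : Matrix m n ℝ)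

theorem landweberStep_toEuclideanLin (y : m → ℝ) (x : n → ℝ) :
    landweberStep (LinearMap.toContinuousLinearMap (Matrix.toEuclideanLin K)) (toLp 2 y)
      (toLp 2 x) = toLp 2 (x + K.transpose.mulVec (y - K.mulVec x)) := by
  classical
  unfold landweberStep
  rw [← LinearMap.adjoint_toContinuousLinearMap, ← Matrix.toEuclideanLin_conjTranspose_eq_adjoint,
    Matrix.conjTranspose_eq_transpose_of_trivial]
  simp only [LinearMap.coe_toContinuousLinearMap', Matrix.toLpLin_toLp,
    Matrix.toLin'_apply, ← toLp_sub, ← toLp_add]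

theorem penalizedLeastSquares_toEuclideanLin (y : m → ℝ) (lam : ℝ)
    (x : EuclideanSpace ℝ n) :
    penalizedLeastSquares (LinearMap.toContinuousLinearMap (Matrix.toEuclideanLin K)) (toLp 2 y)
      (fun x => lam * ∑ i, |x i|) x =
      (∑ j, (K.mulVec (ofLp x) j - y j) ^ 2) + 2 * lam * ∑ i, |x i| := by
  simp [penalizedLeastSquares, EuclideanSpace.real_norm_sq_eq, mul_assoc]

end Matrix

/-- if `‖K‖ < √2` (operator norm), then for any initial vector,
the iterative soft-thresholding sequence
`x⁽ᵏ⁺¹⁾ = S_λ[x⁽ᵏ⁾ + Kᵀ(y − Kx⁽ᵏ⁾)]` converges to a minimizer of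
`F_λ(x) = ‖Kx − y‖² + 2λ‖x‖₁`. -/
theorem ista_converges_to_lasso_minimizer (n p : ℕ) (K : Matrix (Fin n) (Fin p) ℝ)
    (y : Fin n → ℝ) (lam : ℝ) (hlam : 0 < lam)
    (hK : ‖LinearMap.toContinuousLinearMap (Matrix.toEuclideanLin K)‖ < Real.sqrt 2)
    (xseq : ℕ → (Fin p → ℝ))
    (hrec : ∀ k : ℕ,
        xseq (k + 1) =
          softThreshold p lam (xseq k + K.transpose.mulVec (y - K.mulVec (xseq k)))) :
    ∃ xstar : Fin p → ℝ,
      (∀ x : Fin p → ℝ,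
          (∑ j, (K.mulVec xstar j - y j) ^ 2) + 2 * lam * ∑ i, |xstar i|
            ≤ (∑ j, (K.mulVec x j - y j) ^ 2) + 2 * lam * ∑ i, |x i|) ∧
      Tendsto xseq atTop (nhds xstar) := by
  set A := LinearMap.toContinuousLinearMap (Matrix.toEuclideanLin K)
  have hA : ‖A‖ ^ 2 < 2 := (Real.lt_sqrt (norm_nonneg _)).1 hK
  have hmin := exists_isMinOn_penalizedLeastSquares A (toLp 2 y) (by fun_prop)
    (tendsto_mul_sum_abs_cocompact_atTop hlam)
  have hstep (k : ℕ) : toLp 2 (xseq (k + 1)) = toLp 2 (softThreshold p lam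
      (ofLp (landweberStep A (toLp 2 y) (toLp 2 (xseq k))))) := by
    rw [hrec, landweberStep_toEuclideanLin]
  obtain ⟨z, hz, hlim⟩ := (isProxMap_softThreshold hlam.le).exists_isMinOn_tendsto
    (x := fun k => toLp 2 (xseq k)) hA hmin hstep
  refine ⟨ofLp z, fun x => ?_, ((PiLp.continuous_ofLp 2 _).tendsto z).comp hlim⟩
  simpa only [A, penalizedLeastSquares_toEuclideanLin] using isMinOn_univ_iff.1 hz (toLp 2 x)
end

section
/- Let Ω ⊂ ℝᵖ be a nonempty closed convex set, f : ℝᵖ → ℝ continuously differentiable, β, θ ∈ (0,1), and 0 < α_min ≤ α_max. Let {x⁽ᵏ⁾} ⊂ Ω be generated by the monotone gradient projection method: α_k ∈ [α_min, α_max], h⁽ᵏ⁾ = P_Ω(x⁽ᵏ⁾ − α_k∇f(x⁽ᵏ⁾)), d⁽ᵏ⁾ = h⁽ᵏ⁾ − x⁽ᵏ⁾ ≠ 0, x⁽ᵏ⁺¹⁾ = x⁽ᵏ⁾ + λ_k d⁽ᵏ⁾, where λ_k = θ^{j_k} with j_k the smallest nonnegative integer j such that f(x⁽ᵏ⁾ +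 θʲ d⁽ᵏ⁾) ≤ f(x⁽ᵏ⁾) + βθʲ∇f(x⁽ᵏ⁾)ᵀd⁽ᵏ⁾. If the level set Ω₀ = {x ∈ Ω : f(x) ≤ f(x⁽⁰⁾)} is bounded, then every accumulation point of {x⁽ᵏ⁾} is a stationary point of f on Ω. -/
open RealInnerProductSpace Filter

/-!
Write `d = P_Ω(x - α ∇f(x)) - x` and `m = ⟪∇f(x), d⟫`. The variational inequality of the projection
gives `‖d‖² ≤ -α m`, so `m ≤ 0` measures how far `x` is from being stationary. Near a fixed point
and for bounded `d`, the Armijo condition holds at all steplengths below a common threshold as long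
as `m ≤ -ε`, so backtracking then yields a steplength bounded below and a decrease of `f` bounded
below. But `f` decreases along the iterates and converges, because it converges along a filter
witnessing the accumulation point; hence `m → 0` along that filter. Consequently `d → 0`, and the
variational inequality passes to the limit. Since `d → 0` comes from a norm estimate rather than
from extracting a convergent subsequence, the argument works in any Hilbert space.
-/

open scoped Topology Gradient
open Asymptotics

variable {E : Type*} [NormedAddCommGroup E] [InnerProductSpace ℝ E]

section Projection

/-- `v` is a metric projection of `u` onto `Ω`; for closed convex `Ω` this says `v = P_Ω(u)`.
Stated as a relation, it does not presuppose that projections exist or are unique. -/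
def IsProjectionOnto (Ω : Set E) (u v : E) : Prop :=
  v ∈ Ω ∧ ∀ w ∈ Ω, ‖u - v‖ ≤ ‖u - w‖

namespace IsProjectionOnto

variable {Ω : Set E} {u v w x g h z : E} {α αmin : ℝ}

theorem inner_sub_sub_nonpos (hΩ : Convex ℝ Ω) (hv : IsProjectionOnto Ω u v) (hw : w ∈ Ω) :
    ⟪u - v, w - v⟫ ≤ 0 := by
  have : Nonempty Ω := ⟨⟨v, hv.1⟩⟩
  have hbdd : BddBelow (Set.range fun w : Ω => ‖u - w‖) :=
    ⟨0, Set.forall_mem_range.2 fun _ => norm_nonneg _⟩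
  exact (norm_eq_iInf_iff_real_inner_le_zero hΩ hv.1).1
    (le_antisymm (le_ciInf fun w => hv.2 w w.2) (ciInf_le hbdd ⟨v, hv.1⟩)) w hw

theorem neg_inner_sub_le_mul_inner (hΩ : Convex ℝ Ω) (hh : IsProjectionOnto Ω (x - α • g) h)
    (hz : z ∈ Ω) : -⟪h - x, z - h⟫ ≤ α * ⟪g, z - h⟫ := by
  have hvar := hh.inner_sub_sub_nonpos hΩ hz
  rw [show x - α • g - h = -(h - x) - α • g by abel, inner_sub_left, inner_neg_left,
    real_inner_smul_left] at hvar
  linarith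

theorem norm_sub_sq_le (hΩ : Convex ℝ Ω) (hh : IsProjectionOnto Ω (x - α • g) h) (hx : x ∈ Ω) :
    ‖h - x‖ ^ 2 ≤ α * -⟪g, h - x⟫ := by
  have hvar := hh.neg_inner_sub_le_mul_inner hΩ hx
  rwa [← neg_sub h x, inner_neg_right, inner_neg_right, real_inner_self_eq_norm_sq,
    neg_neg] at hvar

theorem inner_sub_nonpos (hΩ : Convex ℝ Ω) (hh : IsProjectionOnto Ω (x - α • g) h) (hx : x ∈ Ω)
    (hα : 0 < α) : ⟪g, h - x⟫ ≤ 0 :=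
  neg_nonneg.1 <| nonneg_of_mul_nonneg_right ((sq_nonneg _).trans (hh.norm_sub_sq_le hΩ hx)) hα

theorem norm_sub_le (hΩ : Convex ℝ Ω) (hh : IsProjectionOnto Ω (x - α • g) h) (hx : x ∈ Ω)
    (hα : 0 ≤ α) : ‖h - x‖ ≤ α * ‖g‖ := by
  have hsq : ‖h - x‖ * ‖h - x‖ ≤ α * ‖g‖ * ‖h - x‖ := calc
    ‖h - x‖ * ‖h - x‖ = ‖h - x‖ ^ 2 := (sq _).symm
    _ ≤ α * -⟪g, h - x⟫ := hh.norm_sub_sq_le hΩ hx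
    _ ≤ α * (‖g‖ * ‖h - x‖) := by
      gcongr
      exact (neg_le_abs _).trans (abs_real_inner_le_norm _ _)
    _ = α * ‖g‖ * ‖h - x‖ := (mul_assoc _ _ _).symm
  rcases (norm_nonneg (h - x)).eq_or_lt with hzero | hpos
  · rw [← hzero]
    positivity
  · exact le_of_mul_le_mul_right hsq hpos

theorem neg_norm_mul_norm_div_le_inner (hΩ : Convex ℝ Ω) (hh : IsProjectionOnto Ω (x - α • g) h)
    (hz : z ∈ Ω) (hαmin : 0 < αmin) (hα : αmin ≤ α) :
    -(‖h - x‖ * ‖z - h‖ / αmin) ≤ ⟪g, z - h⟫ := by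
  have hαpos : 0 < α := hαmin.trans_le hα
  calc
    -(‖h - x‖ * ‖z - h‖ / αmin) ≤ -(‖h - x‖ * ‖z - h‖ / α) := by gcongr
    _ ≤ -(⟪h - x, z - h⟫ / α) := by
      gcongr
      exact real_inner_le_norm _ _
    _ = -⟪h - x, z - h⟫ / α := (neg_div _ _).symm
    _ ≤ ⟪g, z - h⟫ := (div_le_iff₀' hαpos).2 (hh.neg_inner_sub_le_mul_inner hΩ hz)

end IsProjectionOnto

variable {ι : Type*} {l : Filter ι} {Ω : Set E} {x g h : ι → E} {α : ι → ℝ} {αmin αmax : ℝ}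
  {xstar gstar : E}

theorem tendsto_projection_sub_zero_of_tendsto_inner_zero (hΩ : Convex ℝ Ω) (hx : ∀ i, x i ∈ Ω)
    (hα : ∀ i, α i ∈ Set.Ioc 0 αmax) (hh : ∀ i, IsProjectionOnto Ω (x i - α i • g i) (h i))
    (hinner : Tendsto (fun i => ⟪g i, h i - x i⟫) l (𝓝 0)) :
    Tendsto (fun i => h i - x i) l (𝓝 0) := by
  have hsq_le : ∀ i, ‖h i - x i‖ ^ 2 ≤ αmax * -⟪g i, h i - x i⟫ := fun i =>
    ((hh i).norm_sub_sq_le hΩ (hx i)).trans <| mul_le_mul_of_nonneg_right (hα i).2 <|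
      neg_nonneg.2 ((hh i).inner_sub_nonpos hΩ (hx i) (hα i).1)
  have hsq : Tendsto (fun i => ‖h i - x i‖ ^ 2) l (𝓝 0) :=
    squeeze_zero (fun _ => sq_nonneg _) hsq_le (by simpa using hinner.neg.const_mul αmax)
  exact tendsto_zero_iff_norm_tendsto_zero.2 (by simpa using hsq.sqrt)

theorem inner_sub_nonneg_of_tendsto_projection_inner_zero [l.NeBot] (hΩ : Convex ℝ Ω)
    (hαmin : 0 < αmin) (hx : ∀ i, x i ∈ Ω) (hα : ∀ i, α i ∈ Set.Icc αmin αmax)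
    (hh : ∀ i, IsProjectionOnto Ω (x i - α i • g i) (h i))
    (hxlim : Tendsto x l (𝓝 xstar)) (hglim : Tendsto g l (𝓝 gstar))
    (hinner : Tendsto (fun i => ⟪g i, h i - x i⟫) l (𝓝 0)) {z : E} (hz : z ∈ Ω) :
    0 ≤ ⟪gstar, z - xstar⟫ := by
  have hd : Tendsto (fun i => h i - x i) l (𝓝 0) :=
    tendsto_projection_sub_zero_of_tendsto_inner_zero hΩ hx
      (fun i => ⟨hαmin.trans_le (hα i).1, (hα i).2⟩) hh hinner
  have hhlim : Tendsto h l (𝓝 xstar) := by simpa using hd.add hxlim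
  have hzh : Tendsto (fun i => z - h i) l (𝓝 (z - xstar)) := hhlim.const_sub z
  have hlower : Tendsto (fun i => -(‖h i - x i‖ * ‖z - h i‖ / αmin)) l (𝓝 0) := by
    simpa using ((hd.norm.mul hzh.norm).div_const αmin).neg
  exact le_of_tendsto_of_tendsto' hlower (hglim.inner hzh)
    fun i => (hh i).neg_norm_mul_norm_div_le_inner hΩ hz hαmin (hα i).1

end Projection

section LineSearch

variable [CompleteSpace E] {f : E → ℝ} {β θ : ℝ} {xstar : E}

/-- The monotone Armijo sufficient-decrease condition for `f` at `x` along `d` with steplength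
`t`. -/
def ArmijoCondition (f : E → ℝ) (β : ℝ) (x d : E) (t : ℝ) : Prop :=
  f (x + t • d) ≤ f x + β * t * ⟪∇ f x, d⟫

theorem ArmijoCondition.apply_add_smul_le {x d : E} {t : ℝ} (h : ArmijoCondition f β x d t)
    (hβ : 0 ≤ β) (ht : 0 ≤ t) (hm : ⟪∇ f x, d⟫ ≤ 0) : f (x + t • d) ≤ f x :=
  h.trans (add_le_of_nonpos_right (mul_nonpos_of_nonneg_of_nonpos (mul_nonneg hβ ht) hm))

/-- `j` is the exponent returned by Armijo backtracking: the least `j` for which the steplength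
`θ ^ j` satisfies the Armijo condition. -/
def IsBacktrackingExponent (f : E → ℝ) (β θ : ℝ) (x d : E) (j : ℕ) : Prop :=
  ArmijoCondition f β x d (θ ^ j) ∧ ∀ i < j, ¬ ArmijoCondition f β x d (θ ^ i)

theorem continuousAt_gradient_of_contDiffAt (hf : ContDiffAt ℝ 1 f xstar) :
    ContinuousAt (∇ f) xstar :=
  (InnerProductSpace.toDual ℝ E).symm.continuous.continuousAt.comp
    (hf.continuousAt_fderiv one_ne_zero)

theorem isLittleO_sub_sub_inner_gradient (hf : ContDiffAt ℝ 1 f xstar) :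
    (fun p : E × E => f p.1 - f p.2 - ⟪∇ f p.2, p.1 - p.2⟫) =o[𝓝 (xstar, xstar)]
      fun p => p.1 - p.2 := by
  have hstrict : (fun p : E × E => f p.1 - f p.2 - ⟪∇ f xstar, p.1 - p.2⟫) =o[𝓝 (xstar, xstar)]
      fun p => p.1 - p.2 := by
    simpa only [inner_gradient_left] using (hf.hasStrictFDerivAt one_ne_zero).isLittleO
  have hgrad : Tendsto (fun p : E × E => ∇ f xstar - ∇ f p.2) (𝓝 (xstar, xstar)) (𝓝 0) := by
    simpa using ((continuousAt_gradient_of_contDiffAt hf).tendsto.comp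
      (continuous_snd.tendsto (xstar, xstar))).const_sub (∇ f xstar)
  have hinner : (fun p : E × E => ⟪∇ f xstar - ∇ f p.2, p.1 - p.2⟫) =o[𝓝 (xstar, xstar)]
      fun p => p.1 - p.2 := by
    refine isLittleO_iff.2 fun c hc => ?_
    filter_upwards [hgrad.norm.eventually_le_const (by simpa using hc)] with p hp
    exact (norm_inner_le_norm _ _).trans (mul_le_mul_of_nonneg_right hp (norm_nonneg _))
  refine (hstrict.add hinner).congr_left fun p => ?_
  rw [inner_sub_left]
  ring

theorem armijoCondition_of_abs_sub_sub_inner_le {x d : E} {t c : ℝ} (ht : 0 < t)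
    (hmodel : |f (x + t • d) - f x - ⟪∇ f x, t • d⟫| ≤ c * ‖t • d‖)
    (hc : c * ‖d‖ ≤ (1 - β) * -⟪∇ f x, d⟫) : ArmijoCondition f β x d t := by
  rw [real_inner_smul_right, norm_smul, Real.norm_of_nonneg ht.le] at hmodel
  have hscaled := mul_le_mul_of_nonneg_left hc ht.le
  unfold ArmijoCondition
  linarith [le_of_abs_le hmodel]

theorem exists_pos_eventually_armijoCondition (hf : ContDiffAt ℝ 1 f xstar) (hβ : β < 1) (M : ℝ)
    {ε : ℝ} (hε : 0 < ε) :
    ∃ τ > 0, ∀ᶠ x in 𝓝 xstar, ∀ d, ‖d‖ ≤ M → ⟪∇ f x, d⟫ ≤ -ε →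
      ∀ t ∈ Set.Ioc 0 τ, ArmijoCondition f β x d t := by
  obtain ⟨c, hc, hcM⟩ := exists_pos_mul_lt (mul_pos (sub_pos.2 hβ) hε) M
  obtain ⟨δ, hδ, hmodel⟩ :=
    Metric.eventually_nhds_iff.1 ((isLittleO_sub_sub_inner_gradient hf).def hc)
  obtain ⟨τ, hτ, hτM⟩ := exists_pos_mul_lt (half_pos hδ) M
  refine ⟨τ, hτ, ?_⟩
  filter_upwards [Metric.ball_mem_nhds xstar (half_pos hδ)] with x hx d hd hm t ht
  have hxδ : dist x xstar < δ / 2 := hx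
  have hstep : ‖t • d‖ < δ / 2 := calc
    ‖t • d‖ = ‖d‖ * t := by rw [norm_smul, Real.norm_of_nonneg ht.1.le, mul_comm]
    _ ≤ M * τ := mul_le_mul hd ht.2 ht.1.le ((norm_nonneg d).trans hd)
    _ < δ / 2 := hτM
  have htrial : dist (x + t • d) xstar < δ := calc
    dist (x + t • d) xstar ≤ dist (x + t • d) x + dist x xstar := dist_triangle _ _ _
    _ < δ / 2 + δ / 2 := by gcongr; simpa using hstep
    _ = δ := add_halves δ
  have hclose : dist (x + t • d, x) (xstar, xstar) < δ :=
    max_lt htrial (hxδ.trans (half_lt_self hδ))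
  refine armijoCondition_of_abs_sub_sub_inner_le ht.1 (by simpa using hmodel hclose) ?_
  calc
    c * ‖d‖ ≤ M * c := by rw [mul_comm]; gcongr
    _ ≤ (1 - β) * ε := hcM.le
    _ ≤ (1 - β) * -⟪∇ f x, d⟫ :=
      mul_le_mul_of_nonneg_left (le_neg_of_le_neg hm) (sub_pos.2 hβ).le

namespace IsBacktrackingExponent

theorem min_le_pow {x d : E} {j : ℕ} {τ : ℝ} (hj : IsBacktrackingExponent f β θ x d j)
    (hθ : 0 < θ) (hτ : ∀ t ∈ Set.Ioc 0 τ, ArmijoCondition f β x d t) :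
    min 1 (θ * τ) ≤ θ ^ j := by
  cases j with
  | zero => simp
  | succ i =>
    have hi : τ < θ ^ i := by
      by_contra! hle
      exact hj.2 i i.lt_succ_self (hτ _ ⟨pow_pos hθ i, hle⟩)
    calc
      min 1 (θ * τ) ≤ θ * τ := min_le_right _ _
      _ ≤ θ * θ ^ i := by gcongr
      _ = θ ^ (i + 1) := (pow_succ' θ i).symm

theorem tendsto_inner_gradient_zero {ι : Type*} {l : Filter ι} {x d : ι → E} {j : ι → ℕ} {M : ℝ}
    (hj : ∀ i, IsBacktrackingExponent f β θ (x i) (d i) (j i))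
    (hf : ContDiffAt ℝ 1 f xstar) (hβ : β ∈ Set.Ioo 0 1) (hθ : 0 < θ)
    (hx : Tendsto x l (𝓝 xstar)) (hd : ∀ᶠ i in l, ‖d i‖ ≤ M) (hm : ∀ i, ⟪∇ f (x i), d i⟫ ≤ 0)
    (hdecr : Tendsto (fun i => f (x i) - f (x i + θ ^ j i • d i)) l (𝓝 0)) :
    Tendsto (fun i => ⟪∇ f (x i), d i⟫) l (𝓝 0) := by
  refine tendsto_order.2 ⟨fun a ha => ?_, fun b hb => .of_forall fun i => (hm i).trans_lt hb⟩
  obtain ⟨τ, hτ, harmijo⟩ :=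
    exists_pos_eventually_armijoCondition hf hβ.2 M (neg_pos.2 ha)
  have hstep : 0 < min 1 (θ * τ) := lt_min one_pos (mul_pos hθ hτ)
  have hgap : 0 < β * min 1 (θ * τ) * -a := mul_pos (mul_pos hβ.1 hstep) (neg_pos.2 ha)
  filter_upwards [hx.eventually harmijo, hd, hdecr.eventually_lt_const hgap] with i hi hdi hlt
  by_contra! hle
  have hpow : min 1 (θ * τ) ≤ θ ^ j i :=
    (hj i).min_le_pow hθ (hi (d i) hdi (by simpa using hle))
  have haccept : f (x i + θ ^ j i • d i) ≤ f (x i) + β * θ ^ j i * ⟪∇ f (x i), d i⟫ := (hj i).1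
  have hdrop : β * min 1 (θ * τ) * -a ≤ f (x i) - f (x i + θ ^ j i • d i) := calc
    β * min 1 (θ * τ) * -a ≤ β * θ ^ j i * -⟪∇ f (x i), d i⟫ :=
      mul_le_mul (mul_le_mul_of_nonneg_left hpow hβ.1.le) (neg_le_neg hle) (neg_pos.2 ha).le
        (mul_nonneg hβ.1.le (pow_pos hθ _).le)
    _ ≤ f (x i) - f (x i + θ ^ j i • d i) := by linarith
  exact hdrop.not_gt hlt

end IsBacktrackingExponent

end LineSearch

theorem tendsto_sub_succ_zero_of_antitone_of_mapClusterPt {u : ℕ → ℝ} {c : ℝ} (hu : Antitone u)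
    (hc : MapClusterPt c atTop u) : Tendsto (fun k => u k - u (k + 1)) atTop (𝓝 0) := by
  obtain ⟨φ, hφ, hφc⟩ := hc.tendsto_subseq
  have hlim : Tendsto u atTop (𝓝 c) :=
    (tendsto_iff_tendsto_subseq_of_antitone hu hφ.tendsto_atTop).2 hφc
  simpa using hlim.sub (hlim.comp (tendsto_add_atTop_nat 1))

theorem gradient_projection_accumulation_points_stationary_general [CompleteSpace E]
    {Ω : Set E} (hcl : IsClosed Ω) (hconv : Convex ℝ Ω) {f : E → ℝ} (hf : ContDiff ℝ 1 f)
    {β θ : ℝ} (hβ : β ∈ Set.Ioo 0 1) (hθ : 0 < θ) {αmin αmax : ℝ} (hαmin : 0 < αmin)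
    {x h : ℕ → E} {α : ℕ → ℝ} {j : ℕ → ℕ} (hx : ∀ k, x k ∈ Ω)
    (hα : ∀ k, α k ∈ Set.Icc αmin αmax)
    (hproj : ∀ k, IsProjectionOnto Ω (x k - α k • ∇ f (x k)) (h k))
    (hupd : ∀ k, x (k + 1) = x k + θ ^ j k • (h k - x k))
    (hj : ∀ k, IsBacktrackingExponent f β θ (x k) (h k - x k) (j k))
    {xstar : E} (hxstar : MapClusterPt xstar atTop x) :
    xstar ∈ Ω ∧ ∀ z ∈ Ω, 0 ≤ ⟪∇ f xstar, z - xstar⟫ := by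
  obtain ⟨U, hU, hxlim⟩ := mapClusterPt_iff_ultrafilter.1 hxstar
  have hglim : Tendsto (fun k => ∇ f (x k)) U (𝓝 (∇ f xstar)) :=
    (continuousAt_gradient_of_contDiffAt hf.contDiffAt).tendsto.comp hxlim
  have hαpos : ∀ k, 0 < α k := fun k => hαmin.trans_le (hα k).1
  have hm : ∀ k, ⟪∇ f (x k), h k - x k⟫ ≤ 0 := fun k =>
    (hproj k).inner_sub_nonpos hconv (hx k) (hαpos k)
  have hanti : Antitone (f ∘ x) := antitone_nat_of_succ_le fun k => by
    simpa only [Function.comp_apply, hupd k] using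
      (hj k).1.apply_add_smul_le hβ.1.le (pow_pos hθ _).le (hm k)
  have hdecr : Tendsto (fun k => f (x k) - f (x k + θ ^ j k • (h k - x k))) U (𝓝 0) := by
    simpa only [Function.comp_apply, hupd] using
      (tendsto_sub_succ_zero_of_antitone_of_mapClusterPt hanti
        (hxstar.continuousAt_comp hf.continuous.continuousAt)).mono_left hU
  have hdbdd : ∀ᶠ k in U, ‖h k - x k‖ ≤ αmax * (‖∇ f xstar‖ + 1) := by
    filter_upwards [hglim.norm.eventually_le_const (lt_add_one _)] with k hk
    exact ((hproj k).norm_sub_le hconv (hx k) (hαpos k).le).trans <|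
      mul_le_mul (hα k).2 hk (norm_nonneg _) ((hαpos k).le.trans (hα k).2)
  have hmlim : Tendsto (fun k => ⟪∇ f (x k), h k - x k⟫) U (𝓝 0) :=
    IsBacktrackingExponent.tendsto_inner_gradient_zero hj hf.contDiffAt hβ hθ hxlim hdbdd hm hdecr
  exact ⟨hcl.mem_of_tendsto hxlim (.of_forall hx), fun z hz =>
    inner_sub_nonneg_of_tendsto_projection_inner_zero hconv hαmin hx hα hproj hxlim hglim hmlim hz⟩

/-- convergence of the monotone gradient projection method with
Armijo backtracking line search: if the level set `Ω₀ = {x ∈ Ω : f(x) ≤ f(x⁽⁰⁾)}`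
is bounded, then every accumulation point of the sequence `{x⁽ᵏ⁾}` is a
stationary point of `f` on `Ω`. -/
theorem gradient_projection_accumulation_points_stationary (p : ℕ)
    (Ω : Set (EuclideanSpace ℝ (Fin p))) (hcl : IsClosed Ω) (hconv : Convex ℝ Ω)
    (f : EuclideanSpace ℝ (Fin p) → ℝ) (hf : ContDiff ℝ 1 f)
    (β θ : ℝ) (hβ : β ∈ Set.Ioo (0 : ℝ) 1) (hθ : θ ∈ Set.Ioo (0 : ℝ) 1)
    (αmin αmax : ℝ) (hαmin : 0 < αmin) (hαminmax : αmin ≤ αmax)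
    (x h : ℕ → EuclideanSpace ℝ (Fin p)) (αk : ℕ → ℝ) (j : ℕ → ℕ)
    (hxΩ : ∀ k, x k ∈ Ω)
    (hαk : ∀ k, αk k ∈ Set.Icc αmin αmax)
    (hhΩ : ∀ k, h k ∈ Ω)
    (hproj : ∀ k, ∀ w ∈ Ω,
        ‖x k - αk k • gradient f (x k) - h k‖ ≤ ‖x k - αk k • gradient f (x k) - w‖)
    (hdne : ∀ k, h k - x k ≠ 0)
    (hupd : ∀ k, x (k + 1) = x k + θ ^ j k • (h k - x k))
    (harmijo : ∀ k,
        f (x k + θ ^ j k • (h k - x k))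
          ≤ f (x k) + β * θ ^ j k * ⟪gradient f (x k), h k - x k⟫)
    (hjmin : ∀ k, ∀ j' < j k,
        ¬ f (x k + θ ^ j' • (h k - x k))
            ≤ f (x k) + β * θ ^ j' * ⟪gradient f (x k), h k - x k⟫)
    (hbdd : Bornology.IsBounded {z ∈ Ω | f z ≤ f (x 0)}) :
    ∀ xstar : EuclideanSpace ℝ (Fin p), MapClusterPt xstar atTop x →
      xstar ∈ Ω ∧ ∀ z ∈ Ω, 0 ≤ ⟪gradient f xstar, z - xstar⟫ :=
  fun _ => gradient_projection_accumulation_points_stationary_general hcl hconv hf hβ hθ.1 hαmin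
    hxΩ hαk (fun k => ⟨hhΩ k, hproj k⟩) hupd fun k => ⟨harmijo k, hjmin k⟩
end
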